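/- Define σ_n = Σ_{k=0}^{n−1} b_k, R_n = (b_n − (2n + α + 1))/z and r_n = (a_n − σ_n)/z. Then: (i) for every n ≥ 1, r_n² = a_n·R_n·R_{n−1}; (ii) for every n ≥ 0, r_{n+1} + r_n = −(2n + 1 + α − z + z·R_n)·R_n; and (iii) for every n ≥ 1, (r_n + n)·(r_n + n + α) = a_n·(R_n − 1)·(R_{n−1} − 1). -/

import Mathlib

open MeasureTheory intervalIntegral Polynomial

/-!
Integrating the derivative of `x ^ (α + 1) * exp (-x) * p x` over `[0, z]` shows that the truncated
Laguerre functional satisfies a Pearson equation whose only defect is a point mass at `z`. Applied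
to `p = P n ^ 2` and to `p = P n * P (n - 1)`, this equation expresses `R n` and `r n` through the
boundary values `P n z ^ 2` and `P n z * P (n - 1) z`. Relation (i) is then immediate, and (ii) is
the three-term recurrence evaluated at `z`. The recurrence at `z` also gives
`(z - b n) * (r (n + 1) - r n) = a (n + 1) * R (n + 1) - a n * R (n - 1)`. Together with (ii) this
makes `(2 * n + α) * r n + n * (n + α) - a n * (1 - R n - R (n - 1))` independent of `n`, hence
zero, and adding (i) yields (iii).
-/

section EulerOperator

variable {A : Type*} [CommRing A]

lemma coeff_X_mul_derivative (p : A[X]) (k : ℕ) :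
    (X * derivative p).coeff k = k * p.coeff k := by
  cases k with
  | zero => simp
  | succ k => rw [coeff_X_mul, coeff_derivative, Nat.cast_succ, mul_comm]

lemma natDegree_X_mul_derivative_le (p : A[X]) :
    (X * derivative p).natDegree ≤ p.natDegree := by
  refine natDegree_le_iff_coeff_eq_zero.2 fun k hk => ?_
  rw [coeff_X_mul_derivative, coeff_eq_zero_of_natDegree_lt hk, mul_zero]

lemma natDegree_X_mul_derivative_sub_le {p : A[X]} {n : ℕ} (hp : p.natDegree ≤ n + 1) :
    (X * derivative p - C ((n : A) + 1) * p).natDegree ≤ n := by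
  refine natDegree_le_iff_coeff_eq_zero.2 fun k hk => ?_
  rw [coeff_sub, coeff_X_mul_derivative, coeff_C_mul, ← sub_mul]
  rcases Nat.eq_or_lt_of_le (Nat.succ_le_of_lt hk) with rfl | hk'
  · simp
  · rw [coeff_eq_zero_of_natDegree_lt (hp.trans_lt hk'), mul_zero]

end EulerOperator

section LinearFunctional

variable {A : Type*} [CommRing A] {L : A[X] →ₗ[A] A} {P : ℕ → A[X]} {a b : ℕ → A}

lemma coeff_eq_one_of_isMonicOfDegree {p : A[X]} {n : ℕ} (hp : IsMonicOfDegree p n) :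
    p.coeff n = 1 := by
  simpa only [hp.natDegree_eq] using hp.monic.coeff_natDegree

lemma map_C_mul (L : A[X] →ₗ[A] A) (c : A) (p : A[X]) : L (C c * p) = c * L p := by
  rw [← smul_eq_C_mul, map_smul, smul_eq_mul]

/-- `P` is a sequence of monic polynomials, `P n` of degree `n`, pairwise orthogonal with respect to
the moment functional `L`. The norms `L (P n ^ 2)` are not required to be nonzero. -/
structure IsMonicOrthogonal (L : A[X] →ₗ[A] A) (P : ℕ → A[X]) : Prop where
  isMonicOfDegree : ∀ n, IsMonicOfDegree (P n) n
  orthogonal : ∀ m n, m ≠ n → L (P m * P n) = 0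

/-- `P` satisfies the three-term recurrence with coefficients `a` and `b`. The initial relation is
kept apart because `P (n - 1)` stands for `P 0`, and not for `P₋₁ = 0`, when `n = 0`. -/
structure IsThreeTermRecurrence (P : ℕ → A[X]) (a b : ℕ → A) : Prop where
  a_zero : a 0 = 0
  X_mul_zero : X * P 0 = P 1 + C (b 0) * P 0
  X_mul_of_pos : ∀ n, 1 ≤ n → X * P n = P (n + 1) + C (b n) * P n + C (a n) * P (n - 1)

namespace IsThreeTermRecurrence

lemma X_mul (hrec : IsThreeTermRecurrence P a b) (n : ℕ) :
    X * P n = P (n + 1) + C (b n) * P n + C (a n) * P (n - 1) := by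
  cases n with
  | zero => simp [hrec.X_mul_zero, hrec.a_zero]
  | succ n => exact hrec.X_mul_of_pos (n + 1) n.succ_pos

lemma mul_eval (hrec : IsThreeTermRecurrence P a b) (z : A) (n : ℕ) :
    z * (P n).eval z
      = (P (n + 1)).eval z + b n * (P n).eval z + a n * (P (n - 1)).eval z := by
  simpa using congrArg (Polynomial.eval z) (hrec.X_mul n)

lemma coeff_succ_self (hrec : IsThreeTermRecurrence P a b) (hP : ∀ n, IsMonicOfDegree (P n) n)
    (n : ℕ) : (P (n + 1)).coeff n = -∑ k ∈ Finset.range (n + 1), b k := by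
  have coeff_self (m : ℕ) : (P m).coeff m = 1 := coeff_eq_one_of_isMonicOfDegree (hP m)
  induction n with
  | zero =>
    have h := congrArg (fun p => p.coeff 0) hrec.X_mul_zero
    simp only [coeff_X_mul_zero, coeff_add, coeff_C_mul, coeff_self] at h
    rw [Finset.sum_range_one]
    linear_combination -h
  | succ n ih =>
    have h := congrArg (fun p => p.coeff (n + 1)) (hrec.X_mul (n + 1))
    have hlow : (P n).coeff (n + 1) = 0 :=
      coeff_eq_zero_of_natDegree_lt ((hP n).natDegree_eq.trans_lt n.lt_succ_self)
    simp only [coeff_X_mul, coeff_add, coeff_C_mul, coeff_self, Nat.add_sub_cancel, hlow] at h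
    rw [Finset.sum_range_succ]
    linear_combination ih - h

end IsThreeTermRecurrence

namespace IsMonicOrthogonal

lemma coeff_self (hP : IsMonicOrthogonal L P) (n : ℕ) : (P n).coeff n = 1 :=
  coeff_eq_one_of_isMonicOfDegree (hP.isMonicOfDegree n)

lemma natDegree_eq (hP : IsMonicOrthogonal L P) (n : ℕ) : (P n).natDegree = n :=
  (hP.isMonicOfDegree n).natDegree_eq

lemma map_mul_eq_zero_of_degree_lt (hP : IsMonicOrthogonal L P) {n : ℕ} {q : A[X]}
    (hq : q.degree < n) : L (P n * q) = 0 := by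
  nontriviality A
  let S : Polynomial.Sequence A :=
    ⟨P, fun i => by
      rw [degree_eq_natDegree (hP.isMonicOfDegree i).monic.ne_zero, hP.natDegree_eq]⟩
  have hspan : Submodule.span A (P '' Set.Iio n) = degreeLT A n :=
    S.span_degreeLT fun i _ => (hP.isMonicOfDegree i).monic.leadingCoeff ▸ isUnit_one
  have hker : Submodule.span A (P '' Set.Iio n) ≤
      LinearMap.ker (L ∘ₗ LinearMap.mulLeft A (P n)) := by
    rw [Submodule.span_le]
    rintro _ ⟨i, hi, rfl⟩
    exact hP.orthogonal n i (Set.mem_Iio.1 hi).ne'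
  exact hker (hspan ▸ mem_degreeLT.2 hq)

lemma map_mul_eq_coeff_mul (hP : IsMonicOrthogonal L P) {n : ℕ} {q : A[X]}
    (hq : q.natDegree ≤ n) : L (P n * q) = q.coeff n * L (P n ^ 2) := by
  have hdeg : (q - C (q.coeff n) * P n).degree < n := by
    rw [degree_lt_iff_coeff_zero]
    intro k hk
    rw [coeff_sub, coeff_C_mul]
    rcases hk.eq_or_lt with rfl | hk
    · rw [hP.coeff_self, mul_one, sub_self]
    · rw [coeff_eq_zero_of_natDegree_lt (hq.trans_lt hk),
        coeff_eq_zero_of_natDegree_lt ((hP.natDegree_eq n).trans_lt hk), mul_zero, sub_self]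
  have h := hP.map_mul_eq_zero_of_degree_lt hdeg
  rw [mul_sub, mul_left_comm, ← sq, map_sub, map_C_mul] at h
  exact sub_eq_zero.1 h

lemma map_mul_X_mul_derivative_self (hP : IsMonicOrthogonal L P) (n : ℕ) :
    L (P n * (X * derivative (P n))) = n * L (P n ^ 2) := by
  rw [hP.map_mul_eq_coeff_mul
    ((natDegree_X_mul_derivative_le _).trans (hP.natDegree_eq n).le),
    coeff_X_mul_derivative, hP.coeff_self, mul_one]

lemma map_mul_X_mul_derivative_succ (hP : IsMonicOrthogonal L P) (n : ℕ) :
    L (P n * (X * derivative (P (n + 1)))) = -(P (n + 1)).coeff n * L (P n ^ 2) := by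
  have h := hP.map_mul_eq_coeff_mul
    (natDegree_X_mul_derivative_sub_le (hP.natDegree_eq (n + 1)).le)
  rw [mul_sub, mul_left_comm (P n) (C _), map_sub, map_C_mul,
    hP.orthogonal n (n + 1) n.lt_succ_self.ne, coeff_sub, coeff_X_mul_derivative,
    coeff_C_mul] at h
  linear_combination h

lemma map_succ_mul_X_mul_derivative (hP : IsMonicOrthogonal L P) (n : ℕ) :
    L (P (n + 1) * (X * derivative (P n))) = 0 := by
  rw [hP.map_mul_eq_coeff_mul ((natDegree_X_mul_derivative_le _).trans
      ((hP.natDegree_eq n).trans_le n.le_succ)),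
    coeff_X_mul_derivative,
    coeff_eq_zero_of_natDegree_lt ((hP.natDegree_eq n).trans_lt n.lt_succ_self),
    mul_zero, zero_mul]

lemma map_X_mul_sq (hP : IsMonicOrthogonal L P) (hrec : IsThreeTermRecurrence P a b) (n : ℕ) :
    L (X * P n ^ 2) = b n * L (P n ^ 2) := by
  have hpred : a n * L (P (n - 1) * P n) = 0 := by
    cases n with
    | zero => rw [hrec.a_zero, zero_mul]
    | succ n => rw [Nat.add_sub_cancel, hP.orthogonal n (n + 1) n.lt_succ_self.ne, mul_zero]
  rw [sq, ← mul_assoc, hrec.X_mul, add_mul, add_mul, mul_assoc, mul_assoc, map_add, map_add,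
    map_C_mul, map_C_mul, hpred, hP.orthogonal (n + 1) n n.lt_succ_self.ne', zero_add, add_zero]

lemma map_X_mul_succ_mul (hP : IsMonicOrthogonal L P) (hrec : IsThreeTermRecurrence P a b)
    (n : ℕ) : L (X * (P (n + 1) * P n)) = a (n + 1) * L (P n ^ 2) := by
  rw [← mul_assoc, hrec.X_mul, Nat.add_sub_cancel, add_mul, add_mul, mul_assoc, mul_assoc,
    map_add, map_add, map_C_mul, map_C_mul, ← sq, hP.orthogonal (n + 1 + 1) n (by lia),
    hP.orthogonal (n + 1) n (by lia), mul_zero, zero_add, zero_add]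

lemma map_sq_succ (hP : IsMonicOrthogonal L P) (hrec : IsThreeTermRecurrence P a b) (n : ℕ) :
    L (P (n + 1) ^ 2) = a (n + 1) * L (P n ^ 2) := by
  nontriviality A
  have hdeg : (X * P n).natDegree ≤ n + 1 := by
    rw [natDegree_X_mul (hP.isMonicOfDegree n).monic.ne_zero, hP.natDegree_eq]
  have h := hP.map_mul_eq_coeff_mul hdeg
  rw [coeff_X_mul, hP.coeff_self, one_mul] at h
  rw [← h, mul_left_comm, hP.map_X_mul_succ_mul hrec]

end IsMonicOrthogonal

/-- The Pearson equation `(x w)' = (α + 1 - x) w - c δ_z` of the truncated Laguerre weight, in weak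
form: on `[0, z]` the weight `w` has a jump at `z`, which contributes the point mass
`c = z ^ (α + 1) * exp (-z)`. The classical Laguerre functional is the case `c = 0`. -/
def IsLaguerrePearson (α c z : A) (L : A[X] →ₗ[A] A) : Prop :=
  ∀ p : A[X], L (X * derivative p) = L (X * p) - (α + 1) * L p + c * p.eval z

namespace IsLaguerrePearson

variable {α c z : A}

lemma b_sub_mul_map_sq (hL : IsLaguerrePearson α c z L) (hP : IsMonicOrthogonal L P)
    (hrec : IsThreeTermRecurrence P a b) (n : ℕ) :
    (b n - (2 * n + α + 1)) * L (P n ^ 2) = -(c * (P n).eval z ^ 2) := by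
  have hderiv : X * derivative (P n ^ 2)
      = P n * (X * derivative (P n)) + P n * (X * derivative (P n)) := by
    rw [sq, derivative_mul]; ring
  have h := hL (P n ^ 2)
  rw [hderiv, map_add, hP.map_mul_X_mul_derivative_self, hP.map_X_mul_sq hrec, eval_pow] at h
  linear_combination -h

lemma a_sub_sum_mul_map_sq (hL : IsLaguerrePearson α c z L) (hP : IsMonicOrthogonal L P)
    (hrec : IsThreeTermRecurrence P a b) (n : ℕ) :
    (a (n + 1) - ∑ k ∈ Finset.range (n + 1), b k) * L (P n ^ 2)
      = -(c * ((P (n + 1)).eval z * (P n).eval z)) := by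
  have hderiv : X * derivative (P (n + 1) * P n)
      = P n * (X * derivative (P (n + 1))) + P (n + 1) * (X * derivative (P n)) := by
    rw [derivative_mul]; ring
  have h := hL (P (n + 1) * P n)
  rw [hderiv, map_add, hP.map_mul_X_mul_derivative_succ, hP.map_succ_mul_X_mul_derivative,
    hrec.coeff_succ_self hP.isMonicOfDegree, hP.map_X_mul_succ_mul hrec,
    hP.orthogonal (n + 1) n n.lt_succ_self.ne', eval_mul] at h
  linear_combination -h

end IsLaguerrePearson

end LinearFunctional

section Residues

variable {K : Type*} [Field K] {α c z : K} {L : K[X] →ₗ[K] K} {P : ℕ → K[X]} {a b : ℕ → K}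

/-- The residue `R n` at `z` of the diagonal ladder-operator coefficient, which is proportional to
`(P n).eval z ^ 2`. -/
def diagResidue (α z : K) (b : ℕ → K) (n : ℕ) : K :=
  (b n - (2 * n + α + 1)) / z

/-- The residue `r n` at `z` of the off-diagonal ladder-operator coefficient, which is proportional
to `(P n).eval z * (P (n - 1)).eval z`. -/
def offDiagResidue (z : K) (a b : ℕ → K) (n : ℕ) : K :=
  (a n - ∑ k ∈ Finset.range n, b k) / z

lemma mul_diagResidue (hz : z ≠ 0) (n : ℕ) :
    z * diagResidue α z b n = b n - (2 * n + α + 1) :=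
  mul_div_cancel₀ _ hz

lemma mul_offDiagResidue (hz : z ≠ 0) (n : ℕ) :
    z * offDiagResidue z a b n = a n - ∑ k ∈ Finset.range n, b k :=
  mul_div_cancel₀ _ hz

lemma offDiagResidue_zero (ha : a 0 = 0) : offDiagResidue z a b 0 = 0 := by
  simp [offDiagResidue, ha]

lemma mul_offDiagResidue_succ_sub (hz : z ≠ 0) (n : ℕ) :
    z * (offDiagResidue z a b (n + 1) - offDiagResidue z a b n) = a (n + 1) - a n - b n := by
  rw [mul_sub, mul_offDiagResidue hz, mul_offDiagResidue hz, Finset.sum_range_succ]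
  ring

lemma mul_diagResidue_mul_map_sq (hz : z ≠ 0) (hL : IsLaguerrePearson α c z L)
    (hP : IsMonicOrthogonal L P) (hrec : IsThreeTermRecurrence P a b) (n : ℕ) :
    z * diagResidue α z b n * L (P n ^ 2) = -(c * (P n).eval z ^ 2) := by
  rw [mul_diagResidue hz, hL.b_sub_mul_map_sq hP hrec]

lemma mul_offDiagResidue_succ_mul_map_sq (hz : z ≠ 0) (hL : IsLaguerrePearson α c z L)
    (hP : IsMonicOrthogonal L P) (hrec : IsThreeTermRecurrence P a b) (n : ℕ) :
    z * offDiagResidue z a b (n + 1) * L (P n ^ 2)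
      = -(c * ((P (n + 1)).eval z * (P n).eval z)) := by
  rw [mul_offDiagResidue hz, hL.a_sub_sum_mul_map_sq hP hrec]

lemma mul_offDiagResidue_mul_map_sq (hz : z ≠ 0) (hL : IsLaguerrePearson α c z L)
    (hP : IsMonicOrthogonal L P) (hrec : IsThreeTermRecurrence P a b) (n : ℕ) :
    z * offDiagResidue z a b n * L (P n ^ 2)
      = -(c * a n * ((P n).eval z * (P (n - 1)).eval z)) := by
  cases n with
  | zero => simp [offDiagResidue_zero, hrec.a_zero]
  | succ n =>
    rw [hP.map_sq_succ hrec, Nat.add_sub_cancel]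
    linear_combination a (n + 1) * mul_offDiagResidue_succ_mul_map_sq hz hL hP hrec n

lemma mul_diagResidue_pred_mul_map_sq (hz : z ≠ 0) (hL : IsLaguerrePearson α c z L)
    (hP : IsMonicOrthogonal L P) (hrec : IsThreeTermRecurrence P a b) (n : ℕ) :
    z * (a n * diagResidue α z b (n - 1)) * L (P n ^ 2)
      = -(c * (a n * (P (n - 1)).eval z) ^ 2) := by
  cases n with
  | zero => simp [hrec.a_zero]
  | succ n =>
    rw [hP.map_sq_succ hrec, Nat.add_sub_cancel]
    linear_combination a (n + 1) ^ 2 * mul_diagResidue_mul_map_sq hz hL hP hrec n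

theorem offDiagResidue_succ_sq (hz : z ≠ 0) (hL : IsLaguerrePearson α c z L)
    (hP : IsMonicOrthogonal L P) (hne : ∀ n, L (P n ^ 2) ≠ 0)
    (hrec : IsThreeTermRecurrence P a b) (n : ℕ) :
    offDiagResidue z a b (n + 1) ^ 2
      = a (n + 1) * diagResidue α z b (n + 1) * diagResidue α z b n := by
  have hr := mul_offDiagResidue_succ_mul_map_sq hz hL hP hrec n
  have hR := mul_diagResidue_mul_map_sq hz hL hP hrec n
  have hR' := mul_diagResidue_mul_map_sq hz hL hP hrec (n + 1)
  rw [hP.map_sq_succ hrec] at hR'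
  apply mul_left_cancel₀ (pow_ne_zero 2 (mul_ne_zero hz (hne n)))
  calc (z * L (P n ^ 2)) ^ 2 * offDiagResidue z a b (n + 1) ^ 2
      = (z * offDiagResidue z a b (n + 1) * L (P n ^ 2)) ^ 2 := by ring
    _ = -(c * (P (n + 1)).eval z ^ 2) * -(c * (P n).eval z ^ 2) := by rw [hr]; ring
    _ = (z * diagResidue α z b (n + 1) * (a (n + 1) * L (P n ^ 2)))
          * (z * diagResidue α z b n * L (P n ^ 2)) := by rw [hR, hR']
    _ = (z * L (P n ^ 2)) ^ 2
          * (a (n + 1) * diagResidue α z b (n + 1) * diagResidue α z b n) := by ring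

theorem offDiagResidue_succ_add (hz : z ≠ 0) (hL : IsLaguerrePearson α c z L)
    (hP : IsMonicOrthogonal L P) (hne : ∀ n, L (P n ^ 2) ≠ 0)
    (hrec : IsThreeTermRecurrence P a b) (n : ℕ) :
    offDiagResidue z a b (n + 1) + offDiagResidue z a b n
      = (z - b n) * diagResidue α z b n := by
  apply mul_left_cancel₀ (mul_ne_zero hz (hne n))
  linear_combination mul_offDiagResidue_succ_mul_map_sq hz hL hP hrec n
    + mul_offDiagResidue_mul_map_sq hz hL hP hrec n
    - (z - b n) * mul_diagResidue_mul_map_sq hz hL hP hrec n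
    + c * (P n).eval z * hrec.mul_eval z n

theorem sub_mul_offDiagResidue_succ_sub (hz : z ≠ 0) (hL : IsLaguerrePearson α c z L)
    (hP : IsMonicOrthogonal L P) (hne : ∀ n, L (P n ^ 2) ≠ 0)
    (hrec : IsThreeTermRecurrence P a b) (n : ℕ) :
    (z - b n) * (offDiagResidue z a b (n + 1) - offDiagResidue z a b n)
      = a (n + 1) * diagResidue α z b (n + 1) - a n * diagResidue α z b (n - 1) := by
  have hR' := mul_diagResidue_mul_map_sq hz hL hP hrec (n + 1)
  rw [hP.map_sq_succ hrec] at hR'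
  apply mul_left_cancel₀ (mul_ne_zero hz (hne n))
  -- With `s = (P (n + 1)).eval z` and `t = a n * (P (n - 1)).eval z`, the recurrence at `z` reads
  -- `(z - b n) * (P n).eval z = s + t`, and the two sides are `(s - t) * (s + t)` and
  -- `s ^ 2 - t ^ 2` up to a common factor.
  linear_combination (z - b n) * (mul_offDiagResidue_succ_mul_map_sq hz hL hP hrec n
      - mul_offDiagResidue_mul_map_sq hz hL hP hrec n)
    - hR' + mul_diagResidue_pred_mul_map_sq hz hL hP hrec n
    - c * ((P (n + 1)).eval z - a n * (P (n - 1)).eval z) * hrec.mul_eval z n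

theorem offDiagResidue_linear_relation (hz : z ≠ 0) (hL : IsLaguerrePearson α c z L)
    (hP : IsMonicOrthogonal L P) (hne : ∀ n, L (P n ^ 2) ≠ 0)
    (hrec : IsThreeTermRecurrence P a b) (n : ℕ) :
    (2 * n + α) * offDiagResidue z a b n + n * (n + α)
      = a n * (1 - diagResidue α z b n - diagResidue α z b (n - 1)) := by
  induction n with
  | zero => simp [offDiagResidue_zero, hrec.a_zero]
  | succ n ih =>
    rw [Nat.add_sub_cancel, Nat.cast_succ]
    linear_combination ih + offDiagResidue_succ_add hz hL hP hne hrec n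
      - sub_mul_offDiagResidue_succ_sub hz hL hP hne hrec n
      + (1 - diagResidue α z b n) * mul_offDiagResidue_succ_sub (a := a) (b := b) hz n
      + (offDiagResidue z a b (n + 1) - offDiagResidue z a b n + 1)
        * mul_diagResidue (α := α) (b := b) hz n

theorem truncated_laguerre_ladder_residues_general (hz : z ≠ 0) (hL : IsLaguerrePearson α c z L)
    (hP : IsMonicOrthogonal L P) (hne : ∀ n, L (P n ^ 2) ≠ 0)
    (hrec : IsThreeTermRecurrence P a b) {σ R r : ℕ → K}
    (hσ : ∀ n, σ n = ∑ k ∈ Finset.range n, b k)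
    (hR : ∀ n, R n = (b n - (2 * n + α + 1)) / z)
    (hr : ∀ n, r n = (a n - σ n) / z) :
    (∀ n, 1 ≤ n → r n ^ 2 = a n * R n * R (n - 1)) ∧
    (∀ n, r (n + 1) + r n = -((2 * n + 1 + α - z + z * R n) * R n)) ∧
    (∀ n, 1 ≤ n → (r n + n) * (r n + n + α) = a n * (R n - 1) * (R (n - 1) - 1)) := by
  obtain rfl : σ = fun n => ∑ k ∈ Finset.range n, b k := funext hσ
  obtain rfl : R = diagResidue α z b := funext hR
  obtain rfl : r = offDiagResidue z a b := funext hr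
  have hsq (n : ℕ) (hn : 1 ≤ n) : offDiagResidue z a b n ^ 2
      = a n * diagResidue α z b n * diagResidue α z b (n - 1) := by
    obtain ⟨m, rfl⟩ := Nat.exists_eq_add_of_le' hn
    exact offDiagResidue_succ_sq hz hL hP hne hrec m
  refine ⟨hsq, fun n => ?_, fun n hn => ?_⟩
  · linear_combination offDiagResidue_succ_add hz hL hP hne hrec n
      + diagResidue α z b n * mul_diagResidue (α := α) (b := b) hz n
  · linear_combination hsq n hn + offDiagResidue_linear_relation hz hL hP hne hrec n

end Residues

section Weight

variable {w : ℝ → ℝ} {u v : ℝ}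

lemma intervalIntegrable_eval_mul (hw : IntervalIntegrable w volume u v) (p : ℝ[X]) :
    IntervalIntegrable (fun x => p.eval x * w x) volume u v :=
  hw.continuousOn_mul p.continuousOn

/-- The moment functional `p ↦ ∫ x in u..v, p x * w x` of an integrable weight `w`. -/
noncomputable def weightFunctional (hw : IntervalIntegrable w volume u v) : ℝ[X] →ₗ[ℝ] ℝ where
  toFun p := ∫ x in u..v, p.eval x * w x
  map_add' p q := by
    simp only [eval_add, add_mul]
    exact integral_add (intervalIntegrable_eval_mul hw p) (intervalIntegrable_eval_mul hw q)
  map_smul' t p := by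
    simp only [eval_smul, smul_eq_mul, mul_assoc, RingHom.id_apply]
    exact integral_const_mul t _

lemma weightFunctional_apply (hw : IntervalIntegrable w volume u v) (p : ℝ[X]) :
    weightFunctional hw p = ∫ x in u..v, p.eval x * w x :=
  rfl

lemma weightFunctional_sq_pos (huv : u < v) (hw : IntervalIntegrable w volume u v)
    (hpos : ∀ x ∈ Set.Ioo u v, 0 < w x) {p : ℝ[X]} (hp : p ≠ 0) :
    0 < weightFunctional hw (p ^ 2) := by
  have hnonneg : 0 ≤ᵐ[volume.restrict (Set.uIoc u v)] fun x => (p ^ 2).eval x * w x := by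
    rw [Set.uIoc_of_le huv.le, ← restrict_Ioo_eq_restrict_Ioc]
    filter_upwards [ae_restrict_mem measurableSet_Ioo] with x hx
    rw [eval_pow]
    exact mul_nonneg (sq_nonneg _) (hpos x hx).le
  have hsupport : Set.Ioo u v \ {x | p.IsRoot x} ⊆
      Function.support (fun x => (p ^ 2).eval x * w x) ∩ Set.Ioc u v := fun x ⟨hx, hroot⟩ =>
    ⟨mul_ne_zero (by simpa using hroot) (hpos x hx).ne',
      Set.Ioo_subset_Ioc_self hx⟩
  rw [weightFunctional_apply,
    integral_pos_iff_support_of_nonneg_ae' hnonneg (intervalIntegrable_eval_mul hw _)]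
  refine ⟨huv, lt_of_lt_of_le ?_ (measure_mono hsupport)⟩
  rw [measure_sdiff_null ((finite_setOfPred_isRoot hp).measure_zero _)]
  simpa using huv

end Weight

section TruncatedLaguerre

variable {α z : ℝ}

lemma intervalIntegrable_rpow_mul_exp_neg (hα : -1 < α) (u v : ℝ) :
    IntervalIntegrable (fun x => x ^ α * Real.exp (-x)) volume u v :=
  (intervalIntegrable_rpow' hα).mul_continuousOn (by fun_prop)

/-- The truncated Laguerre functional `p ↦ ∫ x in 0..z, p x * x ^ α * exp (-x)`. -/
noncomputable def truncatedLaguerre (z : ℝ) (hα : -1 < α) : ℝ[X] →ₗ[ℝ] ℝ :=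
  weightFunctional (intervalIntegrable_rpow_mul_exp_neg hα 0 z)

lemma truncatedLaguerre_sq_pos (hα : -1 < α) (hz : 0 < z) {p : ℝ[X]} (hp : p ≠ 0) :
    0 < truncatedLaguerre z hα (p ^ 2) :=
  weightFunctional_sq_pos hz _
    (fun _ hx => mul_pos (Real.rpow_pos_of_pos hx.1 α) (Real.exp_pos _)) hp

lemma hasDerivAt_eval_mul_rpow_mul_exp_neg (α : ℝ) (p : ℝ[X]) {x : ℝ} (hx : x ≠ 0) :
    HasDerivAt (fun x => p.eval x * (x ^ (α + 1) * Real.exp (-x)))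
      ((C (α + 1) * p + X * derivative p - X * p).eval x * (x ^ α * Real.exp (-x))) x := by
  have hpow := Real.hasDerivAt_rpow_const (p := α + 1) (Or.inl hx)
  refine ((p.hasDerivAt x).mul (hpow.mul (hasDerivAt_neg x).exp)).congr_deriv ?_
  simp only [Pi.mul_apply, eval_sub, eval_add, eval_mul, eval_C, eval_X, add_sub_cancel_right,
    Real.rpow_add_one hx]
  ring

lemma isLaguerrePearson_truncatedLaguerre (hα : -1 < α) (hz : 0 ≤ z) :
    IsLaguerrePearson α (z ^ (α + 1) * Real.exp (-z)) z (truncatedLaguerre z hα) := by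
  intro p
  have hα' : 0 < α + 1 := by linarith
  have hcont : Continuous fun x => p.eval x * (x ^ (α + 1) * Real.exp (-x)) :=
    p.continuous.mul ((Real.continuous_rpow_const hα'.le).mul (by fun_prop))
  have hFTC : truncatedLaguerre z hα (C (α + 1) * p + X * derivative p - X * p)
      = p.eval z * (z ^ (α + 1) * Real.exp (-z)) := by
    rw [truncatedLaguerre, weightFunctional_apply,
      integral_eq_sub_of_hasDerivAt_of_le hz hcont.continuousOn
        (fun _ hx => hasDerivAt_eval_mul_rpow_mul_exp_neg α p hx.1.ne')
        (intervalIntegrable_eval_mul (intervalIntegrable_rpow_mul_exp_neg hα 0 z) _),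
      Real.zero_rpow hα'.ne', zero_mul, mul_zero, sub_zero]
  rw [map_sub, map_add, map_C_mul] at hFTC
  linear_combination hFTC

lemma isMonicOrthogonal_truncatedLaguerre (hα : -1 < α) {P : ℕ → ℝ[X]}
    (hmonic : ∀ n, (P n).Monic) (hdeg : ∀ n, (P n).natDegree = n)
    (horth : ∀ m n, m ≠ n →
      ∫ x in (0 : ℝ)..z, (P m).eval x * (P n).eval x * x ^ α * Real.exp (-x) = 0) :
    IsMonicOrthogonal (truncatedLaguerre z hα) P where
  isMonicOfDegree n := ⟨hdeg n, hmonic n⟩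
  orthogonal m n hmn := by
    simpa only [truncatedLaguerre, weightFunctional_apply, eval_mul, mul_assoc] using horth m n hmn

end TruncatedLaguerre

/-- Relations satisfied by the ladder-operator residues
R_n = (b_n − (2n+α+1))/z and r_n = (a_n − σ_n)/z, where σ_n = Σ_{k<n} b_k. -/
theorem truncated_laguerre_ladder_residues (α z : ℝ) (hα : -1 < α) (hz : 0 < z)
    (P : ℕ → Polynomial ℝ)
    (hP_monic : ∀ n, (P n).Monic)
    (hP_deg : ∀ n, (P n).natDegree = n)
    (hP_orth : ∀ m n, m ≠ n →
      ∫ x in (0:ℝ)..z, (P m).eval x * (P n).eval x * x ^ α * Real.exp (-x) = 0)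
    (a b : ℕ → ℝ)
    (ha0 : a 0 = 0)
    (hrec0 : Polynomial.X * P 0 = P 1 + Polynomial.C (b 0) * P 0)
    (hrec : ∀ n, 1 ≤ n →
      Polynomial.X * P n = P (n + 1) + Polynomial.C (b n) * P n + Polynomial.C (a n) * P (n - 1))
    (σ R r : ℕ → ℝ)
    (hσ : ∀ n : ℕ, σ n = ∑ k ∈ Finset.range n, b k)
    (hR : ∀ n : ℕ, R n = (b n - (2 * (n : ℝ) + α + 1)) / z)
    (hr : ∀ n : ℕ, r n = (a n - σ n) / z) :
    (∀ n : ℕ, 1 ≤ n → (r n) ^ 2 = a n * R n * R (n - 1)) ∧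
    (∀ n : ℕ, r (n + 1) + r n = -((2 * (n : ℝ) + 1 + α - z + z * R n) * R n)) ∧
    (∀ n : ℕ, 1 ≤ n →
      (r n + (n : ℝ)) * (r n + (n : ℝ) + α) = a n * (R n - 1) * (R (n - 1) - 1)) := by
  exact truncated_laguerre_ladder_residues_general hz.ne'
    (isLaguerrePearson_truncatedLaguerre hα hz.le)
    (isMonicOrthogonal_truncatedLaguerre hα hP_monic hP_deg hP_orth)
    (fun n => (truncatedLaguerre_sq_pos hα hz (hP_monic n).ne_zero).ne')
    ⟨ha0, hrec0, hrec⟩ hσ hR hr
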